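/- Let d ≥ 1 and let V ∈ L¹(ℝ^d) be nonnegative and even with ∫_{ℝ^d} V(y) dy = 1 and finite second moment m₂ := ∫_{ℝ^d} |y|² V(y) dy < ∞. Let ρ : ℝ^d → [0,∞) be three times continuously differentiable with ∫_{ℝ^d} ρ(x) dx = 1 and M₃ := sup_{x∈ℝ^d} ‖D³ρ(x)‖ < ∞, where ‖D³ρ(x)‖ is the norm of the third derivative as a trilinear map. Then ∫_{ℝ^d} ρ(x) |(V ∗ ∇ρ)(x) − ∇ρ(x)|² dx ≤ (1/4) M₃² m₂². -/

import Mathlib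

open MeasureTheory

/-!
Fix `x` and let `A y` be the gradient-valued linear map `D(∇ρ)(x) y`. Taylor's formula of order two
for `∇ρ` gives `|∇ρ(x - y) - ∇ρ(x) + A y| ≤ M₃ |y|² / 2` (`norm_taylor_two_le`). Since `V` is even,
`∫ V(y) A y dy = 0`, and since `∫ V = 1`, integrating against `V` yields the uniform bound
`|(V ∗ ∇ρ)(x) - ∇ρ(x)| ≤ M₃ m₂ / 2`; the weight `ρ` has mass one, so squaring and integrating
against it finishes the proof.
-/

/-- Second order Taylor bound, obtained by comparing the remainder along the segment
`t ↦ x + t • y` with `t ↦ M ‖y‖² t² / 2`. -/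
lemma norm_taylor_two_le {E F : Type*} [NormedAddCommGroup E] [NormedSpace ℝ E]
    [NormedAddCommGroup F] [NormedSpace ℝ F] {g : E → F} (hg : ContDiff ℝ 2 g) {M : ℝ}
    (hM : ∀ x, ‖iteratedFDeriv ℝ 2 g x‖ ≤ M) (x y : E) :
    ‖g (x + y) - g x - fderiv ℝ g x y‖ ≤ M * ‖y‖ ^ 2 / 2 := by
  have hd : Differentiable ℝ g := hg.differentiable (by norm_num)
  have hd2 : Differentiable ℝ (fderiv ℝ g) :=
    (hg.fderiv_right (m := 1) (by norm_num)).differentiable (by norm_num)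
  have hM' : ∀ z, ‖fderiv ℝ (fderiv ℝ g) z‖ ≤ M := by
    intro z
    rw [← norm_iteratedFDeriv_one, norm_iteratedFDeriv_fderiv]
    exact hM z
  have hlip : ∀ z, ‖fderiv ℝ g z - fderiv ℝ g x‖ ≤ M * ‖z - x‖ := fun z =>
    convex_univ.norm_image_sub_le_of_norm_fderiv_le (fun w _ => hd2 w) (fun w _ => hM' w)
      (Set.mem_univ x) (Set.mem_univ z)
  have hder : ∀ t : ℝ, HasDerivAt (fun t : ℝ => g (x + t • y) - g x - t • fderiv ℝ g x y)
      (fderiv ℝ g (x + t • y) y - fderiv ℝ g x y) t := by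
    intro t
    have h1 : HasDerivAt (fun t : ℝ => x + t • y) y t := by
      simpa using ((hasDerivAt_id t).smul_const y).const_add x
    have h2 := (hd (x + t • y)).hasFDerivAt.comp_hasDerivAt t h1
    have h3 : HasDerivAt (fun t : ℝ => t • fderiv ℝ g x y) (fderiv ℝ g x y) t := by
      simpa using (hasDerivAt_id t).smul_const (fderiv ℝ g x y)
    exact (h2.sub_const (g x)).sub h3
  have hB : ∀ t : ℝ, HasDerivAt (fun t : ℝ => M * ‖y‖ ^ 2 / 2 * t ^ 2) (M * ‖y‖ ^ 2 * t) t := by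
    intro t
    refine ((hasDerivAt_pow 2 t).const_mul (M * ‖y‖ ^ 2 / 2)).congr_deriv ?_
    push_cast
    ring
  have key := image_norm_le_of_norm_deriv_right_le_deriv_boundary (a := (0 : ℝ)) (b := 1)
    (fun t _ => (hder t).continuousAt.continuousWithinAt)
    (fun t _ => (hder t).hasDerivWithinAt) (by simp) hB
    (fun t ht => by
      rw [← sub_apply]
      calc _ ≤ ‖fderiv ℝ g (x + t • y) - fderiv ℝ g x‖ * ‖y‖ := ContinuousLinearMap.le_opNorm _ _
        _ ≤ (M * ‖x + t • y - x‖) * ‖y‖ := by gcongr; exact hlip _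
        _ = M * ‖y‖ ^ 2 * t := by
          rw [add_sub_cancel_left, norm_smul, Real.norm_of_nonneg ht.1]; ring)
    (Set.right_mem_Icc.2 zero_le_one)
  simpa using key

/-- An even kernel integrates odd functions to zero. -/
lemma integral_even_smul_odd {E F : Type*} [NormedAddCommGroup E] [MeasurableSpace E]
    [BorelSpace E] [NormedAddCommGroup F] [NormedSpace ℝ F] (μ : Measure E) [μ.IsNegInvariant]
    {V : E → ℝ} (hV : ∀ y, V (-y) = V y) {A : E → F} (hA : ∀ y, A (-y) = -A y) :
    ∫ y, V y • A y ∂μ = 0 := by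
  have h := integral_neg_eq_self (fun y => V y • A y) μ
  simp only [hV, hA, smul_neg, integral_neg] at h
  have h2 : (2 : ℝ) • ∫ y, V y • A y ∂μ = 0 := by
    rw [two_smul]
    nth_rewrite 1 [← h]
    simp
  simpa using h2

/-- Weighted `L²` mollification estimate: for an even probability kernel `V` with finite
second moment `m₂` and a `C³` probability density `ρ` with third derivative bounded by `M₃`,
`∫ ρ |V ∗ ∇ρ − ∇ρ|² ≤ (1/4) M₃² m₂²`. -/
theorem weighted_L2_mollification_gradient
    (d : ℕ) (hd : 1 ≤ d)
    (V : EuclideanSpace ℝ (Fin d) → ℝ)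
    (hVint : Integrable V) (hV0 : ∀ y, 0 ≤ V y) (hVeven : ∀ y, V (-y) = V y)
    (hV1 : (∫ y, V y) = 1)
    (m₂ : ℝ) (hm₂int : Integrable (fun y => ‖y‖ ^ 2 * V y))
    (hm₂ : m₂ = ∫ y, ‖y‖ ^ 2 * V y)
    (ρ : EuclideanSpace ℝ (Fin d) → ℝ)
    (hρ : ContDiff ℝ 3 ρ) (hρ0 : ∀ x, 0 ≤ ρ x) (hρ1 : (∫ x, ρ x) = 1)
    (M₃ : ℝ) (hM₃ : ∀ x, ‖iteratedFDeriv ℝ 3 ρ x‖ ≤ M₃) :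
    (∫ x, ρ x * ‖(∫ y, V y • gradient ρ (x - y)) - gradient ρ x‖ ^ 2)
      ≤ (1 / 4) * M₃ ^ 2 * m₂ ^ 2 := by
  have hf : ContDiff ℝ 2 (fderiv ℝ ρ) := hρ.fderiv_right (by norm_num)
  have hfM : ∀ x, ‖iteratedFDeriv ℝ 2 (fderiv ℝ ρ) x‖ ≤ M₃ := by
    intro x
    rw [norm_iteratedFDeriv_fderiv]
    exact hM₃ x
  have hgc : Continuous (gradient ρ) :=
    (InnerProductSpace.toDual ℝ (EuclideanSpace ℝ (Fin d))).symm.continuous.comp hf.continuous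
  have hpt : ∀ x, ‖(∫ y, V y • gradient ρ (x - y)) - gradient ρ x‖ ≤ M₃ * m₂ / 2 := by
    intro x
    set A : EuclideanSpace ℝ (Fin d) → EuclideanSpace ℝ (Fin d) := fun y =>
      (InnerProductSpace.toDual ℝ (EuclideanSpace ℝ (Fin d))).symm
        (fderiv ℝ (fderiv ℝ ρ) x y) with hA
    have hAc : Continuous A :=
      (InnerProductSpace.toDual ℝ (EuclideanSpace ℝ (Fin d))).symm.continuous.comp
        (fderiv ℝ (fderiv ℝ ρ) x).continuous
    have hAodd : ∀ y, A (-y) = -A y := fun y => by simp [hA]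
    have hAle : ∀ y, ‖A y‖ ≤ ‖fderiv ℝ (fderiv ℝ ρ) x‖ * ‖y‖ := fun y => by
      simp only [hA, LinearIsometryEquiv.norm_map]
      exact ContinuousLinearMap.le_opNorm _ _
    have hR : ∀ y, ‖gradient ρ (x - y) - gradient ρ x + A y‖ ≤ M₃ * ‖y‖ ^ 2 / 2 := by
      intro y
      have h := norm_taylor_two_le hf hfM x (-y)
      rw [← LinearIsometryEquiv.norm_map
        (InnerProductSpace.toDual ℝ (EuclideanSpace ℝ (Fin d))).symm, map_sub, map_sub,
        map_neg, map_neg, sub_neg_eq_add, norm_neg, ← sub_eq_add_neg] at h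
      exact h
    have hRb : ∀ y, ‖V y • (gradient ρ (x - y) - gradient ρ x + A y)‖
        ≤ M₃ / 2 * (‖y‖ ^ 2 * V y) := by
      intro y
      rw [norm_smul, Real.norm_of_nonneg (hV0 y)]
      calc _ ≤ V y * (M₃ * ‖y‖ ^ 2 / 2) := mul_le_mul_of_nonneg_left (hR y) (hV0 y)
        _ = _ := by ring
    have hRint : Integrable (fun y => V y • (gradient ρ (x - y) - gradient ρ x + A y)) := by
      refine (hm₂int.const_mul (M₃ / 2)).mono' ?_ (Filter.Eventually.of_forall hRb)
      refine hVint.aestronglyMeasurable.smul (Continuous.aestronglyMeasurable ?_)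
      exact ((hgc.comp (continuous_const.sub continuous_id)).sub continuous_const).add hAc
    -- The first moment is finite because `‖y‖ ≤ 1 + ‖y‖²`.
    have hAint : Integrable (fun y => V y • A y) := by
      refine ((hVint.add hm₂int).const_mul ‖fderiv ℝ (fderiv ℝ ρ) x‖).mono'
        (hVint.aestronglyMeasurable.smul hAc.aestronglyMeasurable)
        (Filter.Eventually.of_forall fun y => ?_)
      rw [norm_smul, Real.norm_of_nonneg (hV0 y)]
      calc V y * ‖A y‖ ≤ V y * (‖fderiv ℝ (fderiv ℝ ρ) x‖ * (1 + ‖y‖ ^ 2)) := by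
            refine mul_le_mul_of_nonneg_left ((hAle y).trans ?_) (hV0 y)
            gcongr
            nlinarith [sq_nonneg (‖y‖ - 1)]
        _ = _ := by simp only [Pi.add_apply]; ring
    have hcint : Integrable (fun y => V y • gradient ρ x) := hVint.smul_const _
    have hEq : (∫ y, V y • gradient ρ (x - y)) - gradient ρ x
        = ∫ y, V y • (gradient ρ (x - y) - gradient ρ x + A y) := by
      have h1 : (fun y => V y • gradient ρ (x - y)) = fun y =>
          (V y • (gradient ρ (x - y) - gradient ρ x + A y) - V y • A y) + V y • gradient ρ x := by
        funext y
        module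
      have h2 : Integrable (fun y =>
          V y • (gradient ρ (x - y) - gradient ρ x + A y) - V y • A y) := hRint.sub hAint
      rw [h1, integral_add h2 hcint, integral_sub hRint hAint,
        integral_even_smul_odd volume hVeven hAodd, integral_smul_const, hV1]
      simp
    rw [hEq]
    calc _ ≤ ∫ y, M₃ / 2 * (‖y‖ ^ 2 * V y) :=
          norm_integral_le_of_norm_le (hm₂int.const_mul _) (Filter.Eventually.of_forall hRb)
      _ = M₃ * m₂ / 2 := by rw [integral_const_mul, ← hm₂]; ring
  -- A non-integrable `ρ` would have Bochner integral `0`.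
  have hρint : Integrable ρ := by
    by_contra h
    rw [integral_undef h] at hρ1
    exact zero_ne_one hρ1
  calc _ ≤ ∫ x, ρ x * (M₃ * m₂ / 2) ^ 2 := by
        refine integral_mono_of_nonneg (Filter.Eventually.of_forall fun x => ?_)
          (hρint.mul_const _) (Filter.Eventually.of_forall fun x => ?_)
        · exact mul_nonneg (hρ0 x) (sq_nonneg _)
        · exact mul_le_mul_of_nonneg_left
            (pow_le_pow_left₀ (norm_nonneg _) (hpt x) 2) (hρ0 x)
    _ = _ := by rw [integral_mul_const, hρ1]; ring
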